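/- Let N be a positive integer, let E, A be real N×N matrices with E invertible, let δt > 0, let f : ℝ^N → ℝ^N be Lipschitz continuous with constant L ≥ 0, let g : ℕ → ℝ^N, and let x, x̃ : ℕ → ℝ^N be sequences such that E x^k = A x^{k−1} + δt (f(x^{k−1}) + g^k) for all k ≥ 1. Define the residual r^k := A x̃^{k−1} + δt (f(x̃^{k−1}) + g^k) − E x̃^k and the error e^k := x^k − x̃^k. Then for every k ≥ 1, ‖e^k‖₂ ≤ (‖E^{−1} A‖₂ + δt · L · ‖E^{−1}‖₂) · ‖e^{k−1}‖₂ + ‖E^{−1}‖₂ · ‖r^k‖₂. -/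

import Mathlib

open Matrix
open scoped Matrix.Norms.L2Operator

/-- Matrix-vector multiplication, viewed as a map on Euclidean space (so that the
Euclidean 2-norm is used on the result). -/
noncomputable def matVec {N : ℕ} (M : Matrix (Fin N) (Fin N) ℝ)
    (v : EuclideanSpace ℝ (Fin N)) : EuclideanSpace ℝ (Fin N) :=
  (EuclideanSpace.equiv (Fin N) ℝ).symm (M.mulVec v)

theorem matVec_sub' {N : ℕ} (M : Matrix (Fin N) (Fin N) ℝ)
    (v w : EuclideanSpace ℝ (Fin N)) : matVec M (v - w) = matVec M v - matVec M w := by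
  ext i
  simp [matVec, Matrix.mulVec_sub]

theorem matVec_add' {N : ℕ} (M : Matrix (Fin N) (Fin N) ℝ)
    (v w : EuclideanSpace ℝ (Fin N)) : matVec M (v + w) = matVec M v + matVec M w := by
  ext i
  simp [matVec, Matrix.mulVec_add]

theorem matVec_mul' {N : ℕ} (M P : Matrix (Fin N) (Fin N) ℝ)
    (v : EuclideanSpace ℝ (Fin N)) : matVec M (matVec P v) = matVec (M * P) v := by
  ext i
  simp [matVec, Matrix.mulVec_mulVec]

theorem matVec_norm' {N : ℕ} (M : Matrix (Fin N) (Fin N) ℝ)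
    (v : EuclideanSpace ℝ (Fin N)) : ‖matVec M v‖ ≤ ‖M‖ * ‖v‖ :=
  Matrix.l2_opNorm_mulVec M v

/-- The one-step residual-based error inequality
`‖e^k‖ ≤ (‖E⁻¹A‖ + δt L ‖E⁻¹‖) ‖e^{k-1}‖ + ‖E⁻¹‖ ‖r^k‖`. -/
theorem one_step_error_inequality
    (N : ℕ) (hN : 0 < N)
    (E A : Matrix (Fin N) (Fin N) ℝ) (hE : IsUnit E)
    (δt : ℝ) (hδt : 0 < δt)
    (f : EuclideanSpace ℝ (Fin N) → EuclideanSpace ℝ (Fin N))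
    (L : ℝ) (hL : 0 ≤ L)
    (hf : ∀ v w : EuclideanSpace ℝ (Fin N), ‖f v - f w‖ ≤ L * ‖v - w‖)
    (g x xt : ℕ → EuclideanSpace ℝ (Fin N))
    (hx : ∀ k, 1 ≤ k →
      matVec E (x k) = matVec A (x (k - 1)) + δt • (f (x (k - 1)) + g k))
    (r : ℕ → EuclideanSpace ℝ (Fin N))
    (hr : ∀ k, r k =
      matVec A (xt (k - 1)) + δt • (f (xt (k - 1)) + g k) - matVec E (xt k))
    (e : ℕ → EuclideanSpace ℝ (Fin N))
    (he : ∀ k, e k = x k - xt k) :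
    ∀ k, 1 ≤ k →
      ‖e k‖ ≤ (‖E⁻¹ * A‖ + δt * L * ‖E⁻¹‖) * ‖e (k - 1)‖ + ‖E⁻¹‖ * ‖r k‖ := by
  intro k hk
  have h1 : matVec E (e k) = matVec A (e (k - 1))
      + (δt • (f (x (k - 1)) - f (xt (k - 1))) + r k) := by
    rw [he, he, matVec_sub', matVec_sub', hx k hk, hr]
    module
  have hinv : E⁻¹ * E = 1 :=
    Matrix.nonsing_inv_mul E ((Matrix.isUnit_iff_isUnit_det E).1 hE)
  have h2 : e k = matVec (E⁻¹ * A) (e (k - 1))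
      + (matVec E⁻¹ (δt • (f (x (k - 1)) - f (xt (k - 1)))) + matVec E⁻¹ (r k)) := by
    rw [← matVec_mul', ← matVec_add', ← matVec_add', ← h1, matVec_mul', hinv]
    ext i
    simp [matVec]
  have h3 : ‖δt • (f (x (k - 1)) - f (xt (k - 1)))‖ ≤ δt * (L * ‖e (k - 1)‖) := by
    rw [norm_smul, Real.norm_of_nonneg hδt.le, he]
    exact mul_le_mul_of_nonneg_left (hf _ _) hδt.le
  have h4 := (matVec_norm' E⁻¹ (δt • (f (x (k - 1)) - f (xt (k - 1))))).trans
    (mul_le_mul_of_nonneg_left h3 (norm_nonneg _))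
  have h5 := matVec_norm' (E⁻¹ * A) (e (k - 1))
  have h6 := matVec_norm' E⁻¹ (r k)
  have h7 : ‖e k‖ ≤ ‖matVec (E⁻¹ * A) (e (k - 1))‖
      + (‖matVec E⁻¹ (δt • (f (x (k - 1)) - f (xt (k - 1))))‖ + ‖matVec E⁻¹ (r k)‖) := by
    conv_lhs => rw [h2]
    exact (norm_add_le _ _).trans (by gcongr; exact norm_add_le _ _)
  linarith
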